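/- At every point of Ω the following expansions in the frame {∂1 y0, ∂2 y0, b0} hold, with coefficients given by the Christoffel symbols of G: for i, j ∈ {1,2}, ∂i∂j y0 = Γ¹_{ij} ∂1 y0 + Γ²_{ij} ∂2 y0 + Γ³_{ij} b0; for i ∈ {1,2}, ∂i b0 = Γ¹_{i3} ∂1 y0 + Γ²_{i3} ∂2 y0 + Γ³_{i3} b0; and d0 = Γ¹_{33} ∂1 y0 + Γ²_{33} ∂2 y0 + Γ³_{33} b0. -/

import Mathlib

noncomputable section

open scoped Topology ENNReal
open Filter MeasureTheory

/-- Points of the midplate `Ω ⊆ ℝ²`. -/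
abbrev E2 : Type := Fin 2 → ℝ
/-- Vectors in `ℝ³`. -/
abbrev V3 : Type := Fin 3 → ℝ
/-- `3×3` real arrays. -/
abbrev M3 : Type := Fin 3 → Fin 3 → ℝ
/-- `2×2` real arrays. -/
abbrev M2 : Type := Fin 2 → Fin 2 → ℝ

/-- Partial derivative `∂ᵢ` of a scalar field on `ℝ²`. -/
def pd2 (i : Fin 2) (f : E2 → ℝ) (x : E2) : ℝ := fderiv ℝ f x (Pi.single i 1)

/-- Partial derivative `∂ᵢ` of an `ℝ³`-valued field on `ℝ²`. -/
def pdv (i : Fin 2) (f : E2 → V3) (x : E2) : V3 := fderiv ℝ f x (Pi.single i 1)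

/-- Euclidean inner product on `ℝ³`. -/
def dot3 (u v : V3) : ℝ := ∑ k, u k * v k

/-- Matrix product of `3×3` arrays. -/
def mmul (A B : M3) : M3 := fun i j => ∑ k, A i k * B k j

/-- Transpose of a `3×3` array. -/
def transp (A : M3) : M3 := fun i j => A j i

/-- The identity `3×3` array. -/
def idm : M3 := fun i j => if i = j then 1 else 0

/-- Frobenius norm of a `3×3` array. -/
def fnorm (A : M3) : ℝ := Real.sqrt (∑ i, ∑ j, (A i j) ^ 2)

/-- Symmetry of a `3×3` array. -/
def SymM (A : M3) : Prop := ∀ i j, A i j = A j i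

/-- Positive definiteness of a `3×3` array. -/
def PosDefM (A : M3) : Prop := ∀ v : V3, v ≠ 0 → 0 < ∑ i, ∑ j, v i * A i j * v j

/-- The special orthogonal group `SO(3)`. -/
def SO3 : Set M3 := {R | mmul (transp R) R = idm ∧ (Matrix.of R).det = 1}

/-- Entries of the inverse of a `3×3` array. -/
def minv (A : M3) : M3 := fun i j => (Matrix.of A)⁻¹ i j

/-- The columns `∂₁y₀, ∂₂y₀, b₀` of the matrix `Q₀`. -/
def Qcol (y0 b0 : E2 → V3) (x : E2) : Fin 3 → V3 := ![pdv 0 y0 x, pdv 1 y0 x, b0 x]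

/-- The determinant of `Q₀`. -/
def Qdet (y0 b0 : E2 → V3) (x : E2) : ℝ := (Matrix.of fun a j => Qcol y0 b0 x j a).det

/-- Partial derivatives `∂₁, ∂₂, ∂₃` of an `x₃`-independent scalar field (so `∂₃ = 0`). -/
def pd3 (k : Fin 3) (f : E2 → ℝ) (x : E2) : ℝ :=
  if h : (k : ℕ) < 2 then pd2 ⟨(k : ℕ), h⟩ f x else 0

/-- Christoffel symbols `Γ^n_{kl}` of the (`x₃`-independent) metric `G`. -/
def Gamma (G : E2 → M3) (n k l : Fin 3) (x : E2) : ℝ :=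
  (1 / 2) * ∑ s, minv (G x) n s *
    (pd3 k (fun y => G y s l) x + pd3 l (fun y => G y s k) x - pd3 s (fun y => G y k l) x)

/-- Covariant Riemann curvatures `R_{iklm}` of the (`x₃`-independent) metric `G`;
indices are `0`-based, so e.g. `R_{1313} = Riem G 0 2 0 2`. -/
def Riem (G : E2 → M3) (i k l m : Fin 3) (x : E2) : ℝ :=
  (1 / 2) * (pd3 k (fun y => pd3 l (fun z => G z i m) y) x
           + pd3 i (fun y => pd3 m (fun z => G z k l) y) x
           - pd3 k (fun y => pd3 m (fun z => G z i l) y) x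
           - pd3 i (fun y => pd3 l (fun z => G z k m) y) x)
    + ∑ n, ∑ p, G x n p *
        (Gamma G n k l x * Gamma G p i m x - Gamma G n k m x * Gamma G p i l x)

/-- The deformation gradient `∇u = [∂₁u | ∂₂u | ∂₃u]` of `u : Ω^h → ℝ³`. -/
def gradu (u : E2 × ℝ → V3) (x : E2 × ℝ) : M3 :=
  fun a j => ![fderiv ℝ u x (Pi.single 0 1, 0),
               fderiv ℝ u x (Pi.single 1 1, 0),
               fderiv ℝ u x (0, 1)] j a

/-- The elastic energy `E^h(u) = (1/h) ∫_{Ω × (-h/2,h/2)} W(∇u A⁻¹)`. -/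
def Eh (W : M3 → ℝ≥0∞) (A : E2 → M3) (Ω : Set E2) (h : ℝ) (u : E2 × ℝ → V3) : ℝ≥0∞ :=
  (ENNReal.ofReal h)⁻¹ *
    ∫⁻ x in Ω ×ˢ Set.Ioo (-(h / 2)) (h / 2), W (mmul (gradu u x) (minv (A x.1)))

/-- Symmetric part of a `3×3` array. -/
def symM (A : M3) : M3 := fun i j => (A i j + A j i) / 2
/-- Symmetric part of a `2×2` array. -/
def sym2M (A : M2) : M2 := fun i j => (A i j + A j i) / 2
/-- `F₂*`: the `3×3` array with principal `2×2` minor `F₂` and all other entries `0`. -/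
def put (F2 : M2) : M3 :=
  fun i j => if h : (i : ℕ) < 2 ∧ (j : ℕ) < 2 then F2 ⟨i, h.1⟩ ⟨j, h.2⟩ else 0
/-- The tensor product `c ⊗ e₃`. -/
def tene3 (c : V3) : M3 := fun i j => if j = 2 then c i else 0
/-- Cross product in `ℝ³`. -/
def cross (u v : V3) : V3 :=
  ![u 1 * v 2 - u 2 * v 1, u 2 * v 0 - u 0 * v 2, u 0 * v 1 - u 1 * v 0]
/-- The quadratic form `Q₃(F) = D²W(Id₃)(F,F)`, for a density `w`. -/
def Q3d (w : M3 → ℝ) (F : M3) : ℝ := fderiv ℝ (fun P => fderiv ℝ w P F) idm F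
/-- The reduced quadratic form `Q_{2,A}(x', F₂)`:
the infimum of `Q₃(A⁻¹ F̃ A⁻¹)` over all `F̃` whose principal `2×2` minor is `F₂`. -/
def QA (w : M3 → ℝ) (A : E2 → M3) (x : E2) (F2 : M2) : ℝ :=
  ⨅ Ft : {Ft : M3 // ∀ i j : Fin 2, Ft i.castSucc j.castSucc = F2 i j},
    Q3d w (mmul (minv (A x)) (mmul Ft.1 (minv (A x))))

/-!
Put `u(x', x₃) = y₀(x') + x₃ b₀(x') + (x₃² / 2) d₀(x')`. On the plane `x₃ = 0` the gradient of `u`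
is the frame `Q = (∂₁y₀, ∂₂y₀, b₀)`, whose Gram matrix is `G`, and the condition on
`sym ((∇y₀)ᵀ ∇b₀)` together with the definition of `d₀` says that the `x₃`-derivative of the
pull-back metric `(∇u)ᵀ ∇u` vanishes there, as `∂₃G` does. Hence the second derivatives
`Pₖₗ = ∂ₖ∂ₗu`, which are symmetric in `k, l`, satisfy `∂ₖGₛₗ = ⟨Pₖₛ, Qₗ⟩ + ⟨Qₛ, Pₖₗ⟩` for all three
directions `k`. Permuting the indices, as in the Koszul formula, isolates
`2 ⟨Qₛ, Pₖₗ⟩ = ∂ₖGₛₗ + ∂ₗGₛₖ - ∂ₛGₖₗ`, and applying `G⁻¹` turns these inner products into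
coordinates in the frame.
-/

open Matrix

lemma koszul_identity {ι V R : Type*} [CommRing R] {B : V → V → R} (hB : ∀ u v, B u v = B v u)
    (Q : ι → V) {P : ι → ι → V} (hP : ∀ k l, P k l = P l k) (k l s : ι) :
    (B (P k s) (Q l) + B (Q s) (P k l)) + (B (P l s) (Q k) + B (Q s) (P l k)) -
      (B (P s k) (Q l) + B (Q k) (P s l)) = 2 * B (Q s) (P k l) := by
  rw [hP l s, hP l k, hP s k, hB (P s l)]
  ring

lemma mulVec_inv_transpose_mul_self_mulVec {ι R : Type*} [Fintype ι] [DecidableEq ι] [CommRing R]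
    {A : Matrix ι ι R} (hA : IsUnit A.det) (p : ι → R) :
    A *ᵥ ((Aᵀ * A)⁻¹ *ᵥ (Aᵀ *ᵥ p)) = p := by
  have hAt : IsUnit Aᵀ.det := isUnit_det_transpose A hA
  rw [Matrix.mul_inv_rev, mulVec_mulVec, mul_nonsing_inv_cancel_left _ _ hA, mulVec_mulVec,
    nonsing_inv_mul _ hAt, one_mulVec]

section Calculus

variable {𝕜 E F : Type*} [NontriviallyNormedField 𝕜] [NormedAddCommGroup E] [NormedSpace 𝕜 E]
  [NormedAddCommGroup F] [NormedSpace 𝕜 F] {x : E}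

lemma fderiv_dotProduct_apply [CompleteSpace 𝕜] {ι : Type*} [Fintype ι] {f g : E → ι → 𝕜}
    (hf : DifferentiableAt 𝕜 f x) (hg : DifferentiableAt 𝕜 g x) (v : E) :
    fderiv 𝕜 (fun y => f y ⬝ᵥ g y) x v = fderiv 𝕜 f x v ⬝ᵥ g x + f x ⬝ᵥ fderiv 𝕜 g x v := by
  let B := (dotProductBilin 𝕜 𝕜 : (ι → 𝕜) →ₗ[𝕜] (ι → 𝕜) →ₗ[𝕜] 𝕜).toContinuousBilinearMap
  have hB : fderiv 𝕜 (fun y => B (f y) (g y)) x v =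
      B (f x) (fderiv 𝕜 g x v) + B (fderiv 𝕜 f x v) (g x) :=
    DFunLike.congr_fun (B.fderiv_of_bilinear hf hg) v
  rw [add_comm]
  exact hB

lemma fderiv_fderiv_apply_comm {f : E → F} (hf : DifferentiableAt 𝕜 (fderiv 𝕜 f) x)
    (hsymm : IsSymmSndFDerivAt 𝕜 f x) (v w : E) :
    fderiv 𝕜 (fun y => fderiv 𝕜 f y w) x v = fderiv 𝕜 (fun y => fderiv 𝕜 f y v) x w := by
  have fderiv_apply (a b : E) :
      fderiv 𝕜 (fun y => fderiv 𝕜 f y b) x a = fderiv 𝕜 (fderiv 𝕜 f) x a b := by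
    simp [fderiv_clm_apply hf (differentiableAt_const b)]
  rw [fderiv_apply, fderiv_apply, hsymm.eq]

lemma differentiableAt_fderiv_of_contDiffAt {f : E → F} (hf : ContDiffAt 𝕜 2 f x) :
    DifferentiableAt 𝕜 (fderiv 𝕜 f) x :=
  (hf.fderiv_right (m := 1) (by norm_num)).differentiableAt one_ne_zero

end Calculus

lemma dot3_comm (u v : V3) : dot3 u v = dot3 v u :=
  dotProduct_comm u v

lemma pd3_castSucc (i : Fin 2) (f : E2 → ℝ) (x : E2) : pd3 i.castSucc f x = pd2 i f x :=
  dif_pos i.isLt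

lemma pd3_last (f : E2 → ℝ) (x : E2) : pd3 (Fin.last 2) f x = 0 := by
  simp [pd3]

lemma pd2_dot3 {u v : E2 → V3} {x : E2} (hu : DifferentiableAt ℝ u x)
    (hv : DifferentiableAt ℝ v x) (i : Fin 2) :
    pd2 i (fun y => dot3 (u y) (v y)) x = dot3 (pdv i u x) (v x) + dot3 (u x) (pdv i v x) :=
  fderiv_dotProduct_apply hu hv _

lemma eq_sum_minv_smul {Q : Fin 3 → V3} {g : M3} (hQ : (Matrix.of fun a j => Q j a).det ≠ 0)
    (hg : ∀ i j, dot3 (Q i) (Q j) = g i j) (p : V3) :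
    p = ∑ n, (∑ s, minv g n s * dot3 (Q s) p) • Q n := by
  set A : Matrix (Fin 3) (Fin 3) ℝ := Matrix.of fun a j => Q j a
  have gram_eq : Matrix.of g = Aᵀ * A := by
    ext i j
    exact (hg i j).symm
  have sum_eq : ∑ n, (∑ s, minv g n s * dot3 (Q s) p) • Q n =
      A *ᵥ ((Matrix.of g)⁻¹ *ᵥ (Aᵀ *ᵥ p)) := by
    simp only [mulVec_eq_sum _ A, op_smul_eq_smul]
    rfl
  rw [sum_eq, gram_eq, mulVec_inv_transpose_mul_self_mulVec hQ.isUnit]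

lemma eq_sum_Gamma_smul {G : E2 → M3} {x : E2} {Q : Fin 3 → V3} {P : Fin 3 → Fin 3 → V3}
    (hQ : (Matrix.of fun a j => Q j a).det ≠ 0)
    (hG : ∀ i j, dot3 (Q i) (Q j) = G x i j)
    (hP : ∀ k l, P k l = P l k)
    (hdG : ∀ k s l, pd3 k (fun y => G y s l) x = dot3 (P k s) (Q l) + dot3 (Q s) (P k l))
    (k l : Fin 3) :
    P k l = ∑ n, Gamma G n k l x • Q n := by
  have Gamma_eq (n : Fin 3) :
      Gamma G n k l x = ∑ s, minv (G x) n s * dot3 (Q s) (P k l) := by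
    simp only [Gamma, hdG, koszul_identity dot3_comm Q hP, Finset.mul_sum]
    exact Finset.sum_congr rfl fun s _ => by ring
  simp only [Gamma_eq]
  exact eq_sum_minv_smul hQ hG (P k l)

/-- The second derivatives `∂ₖ∂ₗu` at `(x, 0)` of `u(x', x₃) = y₀(x') + x₃ b₀(x') + (x₃² / 2) d`,
that is, the derivatives `∂ₖQₗ` of the frame `Q = (∂₁y₀, ∂₂y₀, b₀)`, extended to the normal
direction `k = 3` by `∂₃∂ⱼy₀ = ∂ⱼb₀` and `∂₃b₀ = d`. -/
def frameDeriv (y0 b0 : E2 → V3) (d : V3) (x : E2) : Fin 3 → Fin 3 → V3 :=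
  ![fun l => pdv 0 (fun y => Qcol y0 b0 y l) x,
    fun l => pdv 1 (fun y => Qcol y0 b0 y l) x,
    ![pdv 0 b0 x, pdv 1 b0 x, d]]

section Frame

variable (y0 b0 : E2 → V3) (d : V3) (x : E2)

lemma Qcol_castSucc (j : Fin 2) : Qcol y0 b0 x j.castSucc = pdv j y0 x := by
  fin_cases j <;> rfl

lemma frameDeriv_castSucc (i : Fin 2) (l : Fin 3) :
    frameDeriv y0 b0 d x i.castSucc l = pdv i (fun y => Qcol y0 b0 y l) x := by
  fin_cases i <;> rfl

lemma frameDeriv_castSucc_castSucc (i j : Fin 2) :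
    frameDeriv y0 b0 d x i.castSucc j.castSucc = pdv i (fun y => pdv j y0 y) x := by
  simp only [frameDeriv_castSucc, Qcol_castSucc]

lemma frameDeriv_castSucc_last (i : Fin 2) :
    frameDeriv y0 b0 d x i.castSucc (Fin.last 2) = pdv i b0 x :=
  frameDeriv_castSucc y0 b0 d x i (Fin.last 2)

lemma frameDeriv_last_castSucc (j : Fin 2) :
    frameDeriv y0 b0 d x (Fin.last 2) j.castSucc = pdv j b0 x := by
  fin_cases j <;> rfl

variable {y0 b0 d x}

lemma frameDeriv_comm (hy : ContDiffAt ℝ 2 y0 x) (k l : Fin 3) :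
    frameDeriv y0 b0 d x k l = frameDeriv y0 b0 d x l k := by
  cases k using Fin.lastCases with
  | last =>
    cases l using Fin.lastCases with
    | last => rfl
    | cast j => rw [frameDeriv_last_castSucc, frameDeriv_castSucc_last]
  | cast i =>
    cases l using Fin.lastCases with
    | last => rw [frameDeriv_last_castSucc, frameDeriv_castSucc_last]
    | cast j =>
      rw [frameDeriv_castSucc_castSucc, frameDeriv_castSucc_castSucc]
      exact fderiv_fderiv_apply_comm (differentiableAt_fderiv_of_contDiffAt hy)
        (hy.isSymmSndFDerivAt (by simp)) _ _

lemma differentiableAt_Qcol (hy : ContDiffAt ℝ 2 y0 x) (hb : DifferentiableAt ℝ b0 x)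
    (l : Fin 3) : DifferentiableAt ℝ (fun y => Qcol y0 b0 y l) x := by
  cases l using Fin.lastCases with
  | last => exact hb
  | cast j =>
    simp only [Qcol_castSucc]
    exact (differentiableAt_fderiv_of_contDiffAt hy).clm_apply (differentiableAt_const _)

lemma pd2_gram {G : E2 → M3} (hy : ContDiffAt ℝ 2 y0 x) (hb : DifferentiableAt ℝ b0 x)
    (hG : ∀ᶠ y in 𝓝 x, ∀ i j, dot3 (Qcol y0 b0 y i) (Qcol y0 b0 y j) = G y i j)
    (i : Fin 2) (s l : Fin 3) :
    pd2 i (fun y => G y s l) x =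
      dot3 (frameDeriv y0 b0 d x i.castSucc s) (Qcol y0 b0 x l) +
        dot3 (Qcol y0 b0 x s) (frameDeriv y0 b0 d x i.castSucc l) := by
  have hGsl : (fun y => G y s l) =ᶠ[𝓝 x] fun y => dot3 (Qcol y0 b0 y s) (Qcol y0 b0 y l) :=
    hG.mono fun _ hGram => (hGram s l).symm
  rw [frameDeriv_castSucc, frameDeriv_castSucc,
    ← pd2_dot3 (differentiableAt_Qcol hy hb s) (differentiableAt_Qcol hy hb l), pd2,
    hGsl.fderiv_eq, pd2]

lemma dot3_frameDeriv_last_add_eq_zero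
    (hsym : ∀ i j : Fin 2,
      dot3 (pdv i y0 x) (pdv j b0 x) + dot3 (pdv j y0 x) (pdv i b0 x) = 0)
    (hd : ∀ i : Fin 2, dot3 (Qcol y0 b0 x i.castSucc) d = -dot3 (pdv i b0 x) (b0 x))
    (hdb : dot3 (b0 x) d = 0) (s l : Fin 3) :
    dot3 (frameDeriv y0 b0 d x (Fin.last 2) s) (Qcol y0 b0 x l) +
      dot3 (Qcol y0 b0 x s) (frameDeriv y0 b0 d x (Fin.last 2) l) = 0 := by
  have Qcol_last : Qcol y0 b0 x (Fin.last 2) = b0 x := rfl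
  have frameDeriv_last_last : frameDeriv y0 b0 d x (Fin.last 2) (Fin.last 2) = d := rfl
  rw [dot3_comm]
  cases s using Fin.lastCases with
  | last =>
    cases l using Fin.lastCases with
    | last => rw [Qcol_last, frameDeriv_last_last, hdb, add_zero]
    | cast j =>
      rw [Qcol_last, frameDeriv_last_last, frameDeriv_last_castSucc, hd, dot3_comm (b0 x),
        neg_add_cancel]
  | cast i =>
    cases l using Fin.lastCases with
    | last =>
      rw [Qcol_last, frameDeriv_last_last, frameDeriv_last_castSucc, hd, dot3_comm (b0 x),
        add_neg_cancel]
    | cast j =>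
      rw [frameDeriv_last_castSucc, frameDeriv_last_castSucc, Qcol_castSucc, Qcol_castSucc, hsym]

end Frame

theorem stmt9_general {G : E2 → M3} {y0 b0 : E2 → V3} {d : V3} {x : E2}
    (hy : ContDiffAt ℝ 2 y0 x) (hb : DifferentiableAt ℝ b0 x) (hdet : Qdet y0 b0 x ≠ 0)
    (hG : ∀ᶠ y in 𝓝 x, ∀ i j, dot3 (Qcol y0 b0 y i) (Qcol y0 b0 y j) = G y i j)
    (hsym : ∀ i j : Fin 2,
      dot3 (pdv i y0 x) (pdv j b0 x) + dot3 (pdv j y0 x) (pdv i b0 x) = 0)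
    (hd : ∀ i : Fin 2, dot3 (Qcol y0 b0 x i.castSucc) d = -dot3 (pdv i b0 x) (b0 x))
    (hdb : dot3 (b0 x) d = 0) :
    (∀ i j : Fin 2,
      pdv i (fun y => pdv j y0 y) x =
        Gamma G 0 i.castSucc j.castSucc x • pdv 0 y0 x +
        Gamma G 1 i.castSucc j.castSucc x • pdv 1 y0 x +
        Gamma G 2 i.castSucc j.castSucc x • b0 x) ∧
    (∀ i : Fin 2,
      pdv i b0 x =
        Gamma G 0 i.castSucc 2 x • pdv 0 y0 x +
        Gamma G 1 i.castSucc 2 x • pdv 1 y0 x +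
        Gamma G 2 i.castSucc 2 x • b0 x) ∧
    d =
      Gamma G 0 2 2 x • pdv 0 y0 x +
      Gamma G 1 2 2 x • pdv 1 y0 x +
      Gamma G 2 2 2 x • b0 x := by
  have hdG (k s l : Fin 3) : pd3 k (fun y => G y s l) x =
      dot3 (frameDeriv y0 b0 d x k s) (Qcol y0 b0 x l) +
        dot3 (Qcol y0 b0 x s) (frameDeriv y0 b0 d x k l) := by
    cases k using Fin.lastCases with
    | last => rw [pd3_last, dot3_frameDeriv_last_add_eq_zero hsym hd hdb]
    | cast i => rw [pd3_castSucc, pd2_gram hy hb hG]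
  have expansion (k l : Fin 3) : frameDeriv y0 b0 d x k l =
      Gamma G 0 k l x • pdv 0 y0 x + Gamma G 1 k l x • pdv 1 y0 x + Gamma G 2 k l x • b0 x :=
    (eq_sum_Gamma_smul hdet hG.self_of_nhds (frameDeriv_comm hy) hdG k l).trans
      (Fin.sum_univ_three _)
  refine ⟨fun i j => ?_, fun i => ?_, expansion 2 2⟩
  · rw [← expansion, frameDeriv_castSucc_castSucc]
  · exact (frameDeriv_castSucc_last y0 b0 d x i).symm.trans (expansion i.castSucc 2)

/-- The expansions of `∂ᵢ∂ⱼ y₀`, `∂ᵢ b₀` and `d₀` in the frame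
`{∂₁y₀, ∂₂y₀, b₀}` have the Christoffel symbols of `G` as coefficients. -/
theorem stmt9
    (Ω : Set E2) (hΩo : IsOpen Ω) (hΩb : Bornology.IsBounded Ω)
    (hΩsc : SimplyConnectedSpace ↥Ω)
    (G : E2 → M3) (hGsm : ContDiffOn ℝ (⊤ : ℕ∞) G (closure Ω))
    (hGsym : ∀ x ∈ closure Ω, SymM (G x)) (hGpos : ∀ x ∈ closure Ω, PosDefM (G x))
    (y0 : E2 → V3) (hy0sm : ContDiffOn ℝ (⊤ : ℕ∞) y0 (closure Ω))
    (himm : ∀ x ∈ Ω, ∀ i j : Fin 2,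
      dot3 (pdv i y0 x) (pdv j y0 x) = G x i.castSucc j.castSucc)
    (b0 : E2 → V3) (hb0sm : ContDiffOn ℝ (⊤ : ℕ∞) b0 (closure Ω))
    (hQ0 : ∀ x ∈ Ω, ∀ i j : Fin 3,
      dot3 (Qcol y0 b0 x i) (Qcol y0 b0 x j) = G x i j)
    (hQdet : ∀ x ∈ Ω, 0 < Qdet y0 b0 x)
    (hsym0 : ∀ x ∈ Ω, ∀ i j : Fin 2,
      dot3 (pdv i y0 x) (pdv j b0 x) + dot3 (pdv j y0 x) (pdv i b0 x) = 0)
    (d0 : E2 → V3) (hd0sm : ContDiffOn ℝ (⊤ : ℕ∞) d0 (closure Ω))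
    (hd0 : ∀ x ∈ Ω,
      (∀ i : Fin 2, dot3 (Qcol y0 b0 x i.castSucc) (d0 x) = - dot3 (pdv i b0 x) (b0 x)) ∧
      dot3 (Qcol y0 b0 x 2) (d0 x) = 0)
 :
    ∀ x ∈ Ω,
      (∀ i j : Fin 2,
        pdv i (fun y => pdv j y0 y) x =
          Gamma G 0 i.castSucc j.castSucc x • pdv 0 y0 x +
          Gamma G 1 i.castSucc j.castSucc x • pdv 1 y0 x +
          Gamma G 2 i.castSucc j.castSucc x • b0 x) ∧
      (∀ i : Fin 2,
        pdv i b0 x =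
          Gamma G 0 i.castSucc 2 x • pdv 0 y0 x +
          Gamma G 1 i.castSucc 2 x • pdv 1 y0 x +
          Gamma G 2 i.castSucc 2 x • b0 x) ∧
      d0 x =
        Gamma G 0 2 2 x • pdv 0 y0 x +
        Gamma G 1 2 2 x • pdv 1 y0 x +
        Gamma G 2 2 2 x • b0 x := by
  intro x hx
  have closure_mem : closure Ω ∈ 𝓝 x := mem_of_superset (hΩo.mem_nhds hx) subset_closure
  exact stmt9_general (contDiffAt_infty.1 (hy0sm.contDiffAt closure_mem) 2)
    ((hb0sm.contDiffAt closure_mem).differentiableAt (by simp)) (hQdet x hx).ne'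
    (eventually_of_mem (hΩo.mem_nhds hx) hQ0) (hsym0 x hx) (hd0 x hx).1 (hd0 x hx).2
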